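/- arXiv:1811.10913 — 2 statements merged into one kernel-verified Lean document; each statement's English description precedes it below -/
import Mathlib

section
/- The algebra A = O(S³), graded by total degree, is strongly ℤ-graded: for every m, n ∈ ℤ the ℂ-span of the products {a b : a ∈ A⁽ᵐ⁾, b ∈ A⁽ⁿ⁾} equals A⁽ᵐ⁺ⁿ⁾; in particular, for every n ∈ ℤ there exist finitely many homogeneous elements a₁,…,a_k of total degree −n and b₁,…,b_k of total degree n with Σᵢ aᵢ bᵢ = 1. (This expresses that O(S³) with the O(U(1))-coaction determined by the ℤ-grading is a principal comodule algebra, i.e., the classical Hopf fibration S³ → S² is a Hopf–Galois extension admitting a strong connection.) -/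
/-!
If `1 ∈ 𝒜₋ₙ 𝒜ₙ`, then `𝒜ₘ₊ₙ = 𝒜ₘ₊ₙ 1 ⊆ 𝒜ₘ₊ₙ 𝒜₋ₙ 𝒜ₙ ⊆ 𝒜ₘ 𝒜ₙ`, so strong grading is a question
about `1` alone. The degrees `n` with `1 ∈ 𝒜₋ₙ 𝒜ₙ` form a submonoid, since a decomposition of `1`
in degree `m` can be inserted in the middle of one in degree `n`. For `O(S³)` the sphere relation
puts `1` in this submonoid and, the algebra being commutative, also `-1`; hence it is all of `ℤ`.
-/

open scoped TensorProduct
noncomputable section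

/-- The total-degree-`n` component of a `ℤ²`-graded module (total degree of a
`ℤ²`-homogeneous element of degree `(m₁,m₂)` is `m₁+m₂`). -/
def totalDeg {A : Type} [AddCommMonoid A] [Module ℂ A]
    (𝒜 : ℤ × ℤ → Submodule ℂ A) (n : ℤ) : Submodule ℂ A :=
  ⨆ (p : ℤ × ℤ) (_ : p.1 + p.2 = n), 𝒜 p

section StrongGrading

variable {R A ι : Type*} [CommSemiring R] [Semiring A] [Algebra R A]

lemma span_setOf_mul_eq_mul (M N : Submodule R A) :
    Submodule.span R {x : A | ∃ a ∈ M, ∃ b ∈ N, x = a * b} = M * N := by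
  rw [Submodule.mul_eq_span_mul_set]
  congr 1
  ext x
  simp only [Set.mem_ofPred_eq, Set.mem_mul, SetLike.mem_coe, eq_comm]

lemma exists_sum_mul_eq_of_mem_mul {M N : Submodule R A} {x : A} (hx : x ∈ M * N) :
    ∃ (k : ℕ) (a b : Fin k → A), (∀ i, a i ∈ M) ∧ (∀ i, b i ∈ N) ∧ ∑ i, a i * b i = x := by
  rw [Submodule.mul_eq_span_mul_set] at hx
  obtain ⟨k, c, g, rfl⟩ := Submodule.mem_span_set'.1 hx
  choose a ha b hb hab using fun i => Set.mem_mul.1 (g i).2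
  exact ⟨k, fun i => c i • a i, b, fun i => M.smul_mem (c i) (ha i), hb,
    by simp only [smul_mul_assoc, hab]⟩

lemma graded_mul_le [Add ι] (𝒜 : ι → Submodule R A) [SetLike.GradedMul 𝒜] (m n : ι) :
    𝒜 m * 𝒜 n ≤ 𝒜 (m + n) :=
  Submodule.mul_le.2 fun _ ha _ hb => SetLike.mul_mem_graded ha hb

variable [AddGroup ι] (𝒜 : ι → Submodule R A)

lemma graded_mul_eq_of_one_mem [SetLike.GradedMul 𝒜] (m : ι) {n : ι}
    (hn : (1 : A) ∈ 𝒜 (-n) * 𝒜 n) : 𝒜 m * 𝒜 n = 𝒜 (m + n) := by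
  refine le_antisymm (graded_mul_le 𝒜 m n) ?_
  calc 𝒜 (m + n) = 𝒜 (m + n) * 1 := (mul_one _).symm
    _ ≤ 𝒜 (m + n) * (𝒜 (-n) * 𝒜 n) := by gcongr; exact Submodule.one_le.2 hn
    _ = 𝒜 (m + n) * 𝒜 (-n) * 𝒜 n := (mul_assoc _ _ _).symm
    _ ≤ 𝒜 (m + n + -n) * 𝒜 n := by gcongr; exact graded_mul_le 𝒜 _ _
    _ = 𝒜 m * 𝒜 n := by rw [add_neg_cancel_right]

lemma one_mem_graded_neg_mul_zero [SetLike.GradedOne 𝒜] : (1 : A) ∈ 𝒜 (-0) * 𝒜 0 := by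
  have h : (1 : A) ∈ 𝒜 0 := SetLike.one_mem_graded 𝒜
  simpa only [neg_zero, mul_one] using Submodule.mul_mem_mul h h

lemma one_mem_graded_neg_mul_add [SetLike.GradedMul 𝒜] {m n : ι}
    (hm : (1 : A) ∈ 𝒜 (-m) * 𝒜 m) (hn : (1 : A) ∈ 𝒜 (-n) * 𝒜 n) :
    (1 : A) ∈ 𝒜 (-(m + n)) * 𝒜 (m + n) := by
  rw [← Submodule.one_le] at hm hn ⊢
  calc 1 ≤ 𝒜 (-n) * 1 * 𝒜 n := by rwa [mul_one]
    _ ≤ 𝒜 (-n) * (𝒜 (-m) * 𝒜 m) * 𝒜 n := by gcongr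
    _ = 𝒜 (-n) * 𝒜 (-m) * (𝒜 m * 𝒜 n) := by simp only [mul_assoc]
    _ ≤ 𝒜 (-n + -m) * 𝒜 (m + n) := mul_le_mul' (graded_mul_le 𝒜 _ _) (graded_mul_le 𝒜 _ _)
    _ = 𝒜 (-(m + n)) * 𝒜 (m + n) := by rw [neg_add_rev]

/-- The degrees `n` with `1 ∈ 𝒜₋ₙ 𝒜ₙ`. The grading is strong, in the sense that `𝒜ₘ 𝒜ₙ = 𝒜ₘ₊ₙ` for
all `m` and `n`, if and only if this is all of `ι`. -/
def strongDegrees [SetLike.GradedMonoid 𝒜] : AddSubmonoid ι where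
  carrier := {n | (1 : A) ∈ 𝒜 (-n) * 𝒜 n}
  zero_mem' := one_mem_graded_neg_mul_zero 𝒜
  add_mem' := one_mem_graded_neg_mul_add 𝒜

end StrongGrading

lemma addSubmonoid_int_eq_top {S : AddSubmonoid ℤ} (h_one : 1 ∈ S) (h_neg_one : -1 ∈ S) :
    S = ⊤ := by
  refine (AddSubmonoid.eq_top_iff' S).2 fun n => ?_
  induction n with
  | zero => exact S.zero_mem
  | succ n ih => exact S.add_mem ih h_one
  | pred n ih => exact S.add_mem ih h_neg_one

theorem classical_hopf_fibration_strongly_graded_general {R A : Type*} [CommSemiring R]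
    [Semiring A] [Algebra R A] (𝒜 : ℤ → Submodule R A) [SetLike.GradedMonoid 𝒜]
    (h_one : (1 : A) ∈ 𝒜 (-1) * 𝒜 1) (h_neg_one : (1 : A) ∈ 𝒜 1 * 𝒜 (-1)) :
    (∀ m n : ℤ,
      Submodule.span R {x : A | ∃ a ∈ 𝒜 m, ∃ b ∈ 𝒜 n, x = a * b} = 𝒜 (m + n)) ∧
    (∀ n : ℤ, ∃ (k : ℕ) (a b : Fin k → A),
      (∀ i, a i ∈ 𝒜 (-n)) ∧ (∀ i, b i ∈ 𝒜 n) ∧ ∑ i, a i * b i = 1) := by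
  have h_top : strongDegrees 𝒜 = ⊤ := addSubmonoid_int_eq_top h_one h_neg_one
  have one_mem (n : ℤ) : (1 : A) ∈ 𝒜 (-n) * 𝒜 n := (AddSubmonoid.eq_top_iff' _).1 h_top n
  exact ⟨fun m n => (span_setOf_mul_eq_mul _ _).trans (graded_mul_eq_of_one_mem 𝒜 m (one_mem n)),
    fun n => exists_sum_mul_eq_of_mem_mul (one_mem n)⟩

section TotalDegree

variable {A : Type}

lemma le_totalDeg [AddCommMonoid A] [Module ℂ A] (𝒜 : ℤ × ℤ → Submodule ℂ A) {p : ℤ × ℤ} {n : ℤ}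
    (hp : p.1 + p.2 = n) : 𝒜 p ≤ totalDeg 𝒜 n :=
  le_iSup₂_of_le p hp le_rfl

variable [Semiring A] [Algebra ℂ A] (𝒜 : ℤ × ℤ → Submodule ℂ A)

lemma totalDeg_mul_le [SetLike.GradedMul 𝒜] (m n : ℤ) :
    totalDeg 𝒜 m * totalDeg 𝒜 n ≤ totalDeg 𝒜 (m + n) := by
  simp only [totalDeg.eq_def 𝒜 m, totalDeg.eq_def 𝒜 n, Submodule.iSup_mul, Submodule.mul_iSup,
    iSup_le_iff]
  rintro q rfl p rfl
  calc 𝒜 p * 𝒜 q ≤ 𝒜 (p + q) := graded_mul_le 𝒜 p q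
    _ ≤ totalDeg 𝒜 (p.1 + p.2 + (q.1 + q.2)) := le_totalDeg 𝒜 (add_add_add_comm ..)

instance totalDeg.gradedMonoid [SetLike.GradedMonoid 𝒜] :
    SetLike.GradedMonoid (totalDeg 𝒜) where
  one_mem := le_totalDeg 𝒜 (add_zero 0) (SetLike.one_mem_graded 𝒜)
  mul_mem m n _ _ ha hb := totalDeg_mul_le 𝒜 m n (Submodule.mul_mem_mul ha hb)

lemma one_mem_totalDeg_neg_one_mul_one {z1 z2 z1s z2s : A}
    (hz1 : z1 ∈ 𝒜 (1, 0)) (hz2 : z2 ∈ 𝒜 (0, 1))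
    (hz1s : z1s ∈ 𝒜 (-1, 0)) (hz2s : z2s ∈ 𝒜 (0, -1))
    (hrel : z1s * z1 + z2s * z2 = 1) :
    (1 : A) ∈ totalDeg 𝒜 (-1) * totalDeg 𝒜 1 := by
  rw [← hrel]
  exact add_mem
    (Submodule.mul_mem_mul (le_totalDeg 𝒜 (add_zero _) hz1s) (le_totalDeg 𝒜 (add_zero _) hz1))
    (Submodule.mul_mem_mul (le_totalDeg 𝒜 (zero_add _) hz2s) (le_totalDeg 𝒜 (zero_add _) hz2))

end TotalDegree

/-- `A = O(S³)`, graded by total degree, is strongly `ℤ`-graded: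
for all `m, n ∈ ℤ` the `ℂ`-span of `{a b : a ∈ A⁽ᵐ⁾, b ∈ A⁽ⁿ⁾}` equals `A⁽ᵐ⁺ⁿ⁾`;
in particular for every `n` there are finitely many homogeneous `a₁,…,a_k` of total
degree `−n` and `b₁,…,b_k` of total degree `n` with `Σᵢ aᵢ bᵢ = 1`. -/
theorem classical_hopf_fibration_strongly_graded
    (A : Type) [CommRing A] [Algebra ℂ A]
    (𝒜 : ℤ × ℤ → Submodule ℂ A) [GradedAlgebra 𝒜]
    (z1 z2 z1s z2s : A)
    (hz1 : z1 ∈ 𝒜 (1, 0)) (hz2 : z2 ∈ 𝒜 (0, 1))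
    (hz1s : z1s ∈ 𝒜 (-1, 0)) (hz2s : z2s ∈ 𝒜 (0, -1))
    (hrel : z1s * z1 + z2s * z2 = 1)
    (huniv : ∀ (C : Type) [CommRing C] [Algebra ℂ C] (w1 w2 w1s w2s : C),
      w1s * w1 + w2s * w2 = 1 →
      ∃! f : A →ₐ[ℂ] C, f z1 = w1 ∧ f z2 = w2 ∧ f z1s = w1s ∧ f z2s = w2s) :
    (∀ m n : ℤ,
      Submodule.span ℂ
          {x : A | ∃ a ∈ totalDeg 𝒜 m, ∃ b ∈ totalDeg 𝒜 n, x = a * b}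
        = totalDeg 𝒜 (m + n)) ∧
    (∀ n : ℤ, ∃ (k : ℕ) (a b : Fin k → A),
      (∀ i, a i ∈ totalDeg 𝒜 (-n)) ∧ (∀ i, b i ∈ totalDeg 𝒜 n) ∧
      ∑ i, a i * b i = 1) := by
  have h_one := one_mem_totalDeg_neg_one_mul_one 𝒜 hz1 hz2 hz1s hz2s hrel
  exact classical_hopf_fibration_strongly_graded_general (totalDeg 𝒜) h_one (by rwa [mul_comm])
end
end

section
/- The map φ_θ maps (Γ¹(A_θ))² bijectively onto (Γ¹(A))², and hence descends to a linear bijection φ̄_θ : Ω¹(A_θ) → Ω¹(A), which sends the class of a d_θ a' to e^{πiθ(m₁m₂'−m₂m₁')} a da' for ℤ²-homogeneous a of degree (m₁,m₂) and a' of degree (m₁',m₂'). Moreover v ∘ φ̄_θ = v_θ, i.e., φ̄_θ is compatible with the vertical lifts of the Kähler-type Atiyah sequences of the deformed and classical Hopf fibrations. -/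
/-!
The bicharacter `γ(p, q) = e^{πiθ(p₁q₂ − p₂q₁)}` is all that matters about the deformation. Give
`a ⊗ a'` the total degree `deg a + deg a'`. Multiplicativity of `γ` shows that `φ_θ` turns the
braided product of elements of total degrees `r` and `s` into `γ(r, s)` times their ordinary
product; and since `μ_{A_θ} = μ_A ∘ φ_θ`, it carries `Γ¹(A_θ)` onto `Γ¹(A)`. As `Γ¹(A_θ)` is spanned
by elements of pure total degree and the scalars `γ(r, s)` are invertible, the span of the braided
products is carried onto the span of the ordinary products.

The Euler operator `E` is a derivation, so `a ⊗ a' ↦ a E(a')` kills `(Γ¹(A))²`. Both `id ⊗ E` and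
`φ_θ` are diagonal on homogeneous tensors, hence commute, which gives `v ∘ φ̄_θ = v_θ`.
-/

open scoped TensorProduct
noncomputable section

/-- The phase factor `e^{πiθ(m₁m₂' − m₂m₁')}`. -/
def phase (θ : ℝ) (p q : ℤ × ℤ) : ℂ :=
  Complex.exp (Complex.I * ((Real.pi * θ : ℝ) : ℂ) * ((p.1 * q.2 - p.2 * q.1 : ℤ) : ℂ))

/-- The cotriangular structure phase `R_θ(t_u ⊗ t_w) = e^{−2πiθ(u₁w₂ − u₂w₁)}`. -/
def rphase (θ : ℝ) (u w : ℤ × ℤ) : ℂ :=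
  Complex.exp (-(Complex.I * ((2 * Real.pi * θ : ℝ) : ℂ) * ((u.1 * w.2 - u.2 * w.1 : ℤ) : ℂ)))

section Submodules

variable {R M N P : Type*} [CommSemiring R] [AddCommMonoid M] [AddCommMonoid N] [AddCommMonoid P]
  [Module R M] [Module R N] [Module R P]

lemma map₂_span_span_le_of_eq_smul {f g : M →ₗ[R] N →ₗ[R] P} {s : Set M} {t : Set N}
    (h : ∀ x ∈ s, ∀ y ∈ t, ∃ c : R, f x y = c • g x y) :
    Submodule.map₂ f (.span R s) (.span R t) ≤ Submodule.map₂ g (.span R s) (.span R t) := by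
  rw [Submodule.map₂_span_span, Submodule.span_le]
  rintro _ ⟨x, hx, y, hy, rfl⟩
  obtain ⟨c, hc⟩ := h x hx y hy
  simpa only [hc, SetLike.mem_coe] using Submodule.smul_mem _ c <|
    Submodule.apply_mem_map₂ g (Submodule.subset_span hx) (Submodule.subset_span hy)

lemma map₂_span_span_eq_of_eq_smul {f g : M →ₗ[R] N →ₗ[R] P} {s : Set M} {t : Set N}
    (h : ∀ x ∈ s, ∀ y ∈ t, ∃ c : Rˣ, f x y = c • g x y) :
    Submodule.map₂ f (.span R s) (.span R t) = Submodule.map₂ g (.span R s) (.span R t) := by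
  refine le_antisymm (map₂_span_span_le_of_eq_smul fun x hx y hy ↦ ?_)
    (map₂_span_span_le_of_eq_smul fun x hx y hy ↦ ?_)
  · obtain ⟨c, hc⟩ := h x hx y hy
    exact ⟨c, hc⟩
  · obtain ⟨c, hc⟩ := h x hx y hy
    exact ⟨c⁻¹.val, eq_inv_smul_iff.mpr hc.symm⟩

lemma bijOn_of_map_eq {f : M →ₗ[R] N} (hf : Function.Injective f) {p : Submodule R M}
    {q : Submodule R N} (h : p.map f = q) : Set.BijOn f p q :=
  h ▸ hf.injOn.bijOn_image

end Submodules

section PhaseMap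

variable {R ι κ M N P : Type*} [CommSemiring R] [DecidableEq ι] [DecidableEq κ]
  [AddCommMonoid M] [AddCommMonoid N] [AddCommMonoid P] [Module R M] [Module R N] [Module R P]
  (ℳ : ι → Submodule R M) (𝒩 : κ → Submodule R N)

section Glue

variable [DirectSum.Decomposition ℳ]

/-- The linear map on a graded module that agrees with `F i` in degree `i`. -/
def gradedGlue (F : ι → M →ₗ[R] P) : M →ₗ[R] P :=
  DirectSum.toModule R ι P (fun i ↦ F i ∘ₗ (ℳ i).subtype) ∘ₗ
    (DirectSum.decomposeLinearEquiv ℳ).toLinearMap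

lemma gradedGlue_apply_of_mem (F : ι → M →ₗ[R] P) {i : ι} {m : M} (hm : m ∈ ℳ i) :
    gradedGlue ℳ F m = F i m := by
  lift m to ℳ i using hm
  simp [gradedGlue, DirectSum.toModule_lof]

end Glue

/-- A phase map on a tensor product of graded modules: it multiplies `m ⊗ n`, with `m` of degree
`i` and `n` of degree `j`, by the scalar `c i j`. The paper's `φ_θ` is the case `c = phase θ`. -/
def IsPhaseMap (c : ι → κ → R) (φ : M ⊗[R] N →ₗ[R] M ⊗[R] N) : Prop :=
  ∀ i j, ∀ m ∈ ℳ i, ∀ n ∈ 𝒩 j, φ (m ⊗ₜ[R] n) = c i j • (m ⊗ₜ[R] n)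

variable [DirectSum.Decomposition ℳ] [DirectSum.Decomposition 𝒩]

lemma tensorProduct_ext_homogeneous {f g : M ⊗[R] N →ₗ[R] P}
    (h : ∀ i j, ∀ m ∈ ℳ i, ∀ n ∈ 𝒩 j, f (m ⊗ₜ[R] n) = g (m ⊗ₜ[R] n)) : f = g := by
  refine TensorProduct.ext (DirectSum.decompose_lhom_ext ℳ fun i ↦ ?_)
  ext m : 1
  refine DirectSum.decompose_lhom_ext 𝒩 fun j ↦ ?_
  ext n
  exact h i j m m.2 n n.2

lemma exists_isPhaseMap (c : ι → κ → R) : ∃ φ, IsPhaseMap ℳ 𝒩 c φ := by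
  let F (i : ι) : M →ₗ[R] N →ₗ[R] M ⊗[R] N :=
    (gradedGlue 𝒩 fun j ↦ c i j • (TensorProduct.mk R M N).flip).flip
  refine ⟨TensorProduct.lift (gradedGlue ℳ F), fun i j m hm n hn ↦ ?_⟩
  simp [F, gradedGlue_apply_of_mem ℳ F hm, gradedGlue_apply_of_mem 𝒩 _ hn]

namespace IsPhaseMap

variable {ℳ 𝒩} {c d : ι → κ → R} {φ ψ : M ⊗[R] N →ₗ[R] M ⊗[R] N}

lemma comp_eq_id (hψ : IsPhaseMap ℳ 𝒩 d ψ) (hφ : IsPhaseMap ℳ 𝒩 c φ)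
    (hcd : ∀ i j, c i j * d i j = 1) : ψ ∘ₗ φ = LinearMap.id :=
  tensorProduct_ext_homogeneous ℳ 𝒩 fun i j m hm n hn ↦ by
    simp [hφ i j m hm n hn, hψ i j m hm n hn, smul_smul, hcd]

lemma bijective (hφ : IsPhaseMap ℳ 𝒩 c φ) (hc : ∀ i j, IsUnit (c i j)) :
    Function.Bijective φ := by
  obtain ⟨ψ, hψ⟩ := exists_isPhaseMap ℳ 𝒩 fun i j ↦ Ring.inverse (c i j)
  have hψφ := hψ.comp_eq_id hφ fun i j ↦ Ring.mul_inverse_cancel _ (hc i j)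
  have hφψ := hφ.comp_eq_id hψ fun i j ↦ Ring.inverse_mul_cancel _ (hc i j)
  exact Function.bijective_iff_has_inverse.mpr
    ⟨ψ, LinearMap.congr_fun hψφ, LinearMap.congr_fun hφψ⟩

lemma comp_comm (hφ : IsPhaseMap ℳ 𝒩 c φ) (hψ : IsPhaseMap ℳ 𝒩 d ψ) : φ ∘ₗ ψ = ψ ∘ₗ φ :=
  tensorProduct_ext_homogeneous ℳ 𝒩 fun i j m hm n hn ↦ by
    simp [hφ i j m hm n hn, hψ i j m hm n hn, smul_comm (c i j)]

end IsPhaseMap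

end PhaseMap

section TotalDegree

variable {R ι A : Type*} [CommRing R] [AddMonoid ι] [CommRing A] [Algebra R A]
  (𝒜 : ι → Submodule R A)

/-- The part of `A ⊗ A` of total degree `r`. -/
def totalDegree (r : ι) : Submodule R (A ⊗[R] A) :=
  .span R {x | ∃ p q, p + q = r ∧ ∃ a ∈ 𝒜 p, ∃ b ∈ 𝒜 q, a ⊗ₜ[R] b = x}

variable {𝒜}

lemma tmul_mem_totalDegree {p q : ι} {a b : A} (ha : a ∈ 𝒜 p) (hb : b ∈ 𝒜 q) :
    a ⊗ₜ[R] b ∈ totalDegree 𝒜 (p + q) :=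
  Submodule.subset_span ⟨p, q, rfl, a, ha, b, hb, rfl⟩

/-- A tensor `x` in the kernel equals `x - f x ⊗ 1`, which splits into the elements
`a ⊗ b - f (a ⊗ b) ⊗ 1` with `a` and `b` homogeneous. -/
lemma span_ker_inter_totalDegree [DecidableEq ι] [GradedAlgebra 𝒜] {f : A ⊗[R] A →ₗ[R] A}
    (hf_one : ∀ a, f (a ⊗ₜ[R] 1) = a)
    (hf_deg : ∀ p q, ∀ a ∈ 𝒜 p, ∀ b ∈ 𝒜 q, f (a ⊗ₜ[R] b) ∈ 𝒜 (p + q)) :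
    Submodule.span R {x | x ∈ LinearMap.ker f ∧ ∃ r, x ∈ totalDegree 𝒜 r} = LinearMap.ker f := by
  set S : Set (A ⊗[R] A) := {x | x ∈ LinearMap.ker f ∧ ∃ r, x ∈ totalDegree 𝒜 r}
  let g : A ⊗[R] A →ₗ[R] A ⊗[R] A := LinearMap.id - (TensorProduct.mk R A A).flip 1 ∘ₗ f
  refine le_antisymm (Submodule.span_le.mpr fun x hx ↦ hx.1) fun x hx ↦ ?_
  have hg_tmul {p q : ι} {a b : A} (ha : a ∈ 𝒜 p) (hb : b ∈ 𝒜 q) : g (a ⊗ₜ b) ∈ S := by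
    refine ⟨by simp [g, hf_one], p + q, sub_mem (tmul_mem_totalDegree ha hb) ?_⟩
    simpa using tmul_mem_totalDegree (hf_deg p q a ha b hb) (SetLike.GradedOne.one_mem (A := 𝒜))
  have hg : (Submodule.span R S).mkQ ∘ₗ g = 0 :=
    tensorProduct_ext_homogeneous 𝒜 𝒜 fun p q a ha b hb ↦
      (Submodule.Quotient.mk_eq_zero _).mpr (Submodule.subset_span (hg_tmul ha hb))
  have hgx : g x = x := by simp [g, LinearMap.mem_ker.mp hx]
  rw [← hgx]
  exact (Submodule.Quotient.mk_eq_zero _).mp (LinearMap.congr_fun hg x)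

end TotalDegree

section Twist

variable {R ι A : Type*} [CommRing R] [AddMonoid ι] [CommRing A] [Algebra R A]
  (𝒜 : ι → Submodule R A)

/-- `stp` is the star product obtained from the multiplication of `A` by the phases `c`. -/
def IsTwistedMul (c : ι → ι → R) (stp : A →ₗ[R] A →ₗ[R] A) : Prop :=
  ∀ p q, ∀ a ∈ 𝒜 p, ∀ b ∈ 𝒜 q, stp a b = c p q • (a * b)

/-- `bmul` is the braided product on `A ⊗ A` formed from the star product `stp` and the
braiding phase `ρ`, which is picked up when the two inner factors pass each other. -/
def IsBraidedMul (ρ : ι → ι → R) (stp : A →ₗ[R] A →ₗ[R] A)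
    (bmul : A ⊗[R] A →ₗ[R] A ⊗[R] A →ₗ[R] A ⊗[R] A) : Prop :=
  ∀ p p' u u', ∀ a ∈ 𝒜 p, ∀ a' ∈ 𝒜 p', ∀ b ∈ 𝒜 u, ∀ b' ∈ 𝒜 u',
    bmul (a ⊗ₜ[R] a') (b ⊗ₜ[R] b') = ρ u p' • (stp a b ⊗ₜ[R] stp a' b')

/-- `E` is the Euler operator of the grading, degrees being weighted by the additive map `δ`. The
Hopf fibration has `δ (m₁, m₂) = m₁ + m₂`. -/
def IsEulerOperator (δ : ι →+ R) (E : A →ₗ[R] A) : Prop :=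
  ∀ p, ∀ a ∈ 𝒜 p, E a = δ p • a

lemma braiding_mul_bicharacter {γ : AddChar ι (AddChar ι R)} {ρ : ι → ι → R}
    (hρ : ∀ u w, γ u w * ρ u w = γ w u) (p p' u u' : ι) :
    ρ u p' * γ p u * γ p' u' * γ (p + u) (p' + u') = γ (p + p') (u + u') * (γ p p' * γ u u') := by
  simp only [AddChar.map_add_eq_mul, AddChar.mul_apply]
  linear_combination (γ p u * γ p' u' * γ p p' * γ p u' * γ u u') * hρ u p'

variable {𝒜}

lemma IsEulerOperator.isPhaseMap_map_id {δ : ι →+ R} {E : A →ₗ[R] A} (hE : IsEulerOperator 𝒜 δ E) :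
    IsPhaseMap 𝒜 𝒜 (fun _ q ↦ δ q) (TensorProduct.map LinearMap.id E) := by
  intro p q a _ b hb
  simp [hE q b hb]

variable [DecidableEq ι] [GradedAlgebra 𝒜]

lemma IsTwistedMul.lift_eq_mul'_comp {c : ι → ι → R} {stp : A →ₗ[R] A →ₗ[R] A}
    {φ : A ⊗[R] A →ₗ[R] A ⊗[R] A} (hstp : IsTwistedMul 𝒜 c stp) (hφ : IsPhaseMap 𝒜 𝒜 c φ) :
    TensorProduct.lift stp = LinearMap.mul' R A ∘ₗ φ :=
  tensorProduct_ext_homogeneous 𝒜 𝒜 fun p q a ha b hb ↦ by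
    simp [hφ p q a ha b hb, hstp p q a ha b hb]

lemma IsTwistedMul.map_ker_lift {c : ι → ι → R} {stp : A →ₗ[R] A →ₗ[R] A}
    {φ : A ⊗[R] A →ₗ[R] A ⊗[R] A} (hstp : IsTwistedMul 𝒜 c stp) (hφ : IsPhaseMap 𝒜 𝒜 c φ)
    (hc : ∀ p q, IsUnit (c p q)) :
    (LinearMap.ker (TensorProduct.lift stp)).map φ = LinearMap.ker (LinearMap.mul' R A) := by
  rw [hstp.lift_eq_mul'_comp hφ, LinearMap.ker_comp,
    Submodule.map_comap_eq_of_surjective (hφ.bijective hc).surjective]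

variable {γ : AddChar ι (AddChar ι R)} {ρ : ι → ι → R} {stp : A →ₗ[R] A →ₗ[R] A}
  {φ : A ⊗[R] A →ₗ[R] A ⊗[R] A} {bmul : A ⊗[R] A →ₗ[R] A ⊗[R] A →ₗ[R] A ⊗[R] A}

lemma IsTwistedMul.apply_one (hstp : IsTwistedMul 𝒜 (γ · ·) stp) (a : A) : stp a 1 = a := by
  suffices stp.flip 1 = LinearMap.id from LinearMap.congr_fun this a
  refine DirectSum.decompose_lhom_ext 𝒜 fun p ↦ ?_
  ext a
  simpa using hstp p 0 a a.2 1 SetLike.GradedOne.one_mem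

lemma IsPhaseMap.apply_tmul_one (hφ : IsPhaseMap 𝒜 𝒜 (γ · ·) φ) (a : A) :
    φ (a ⊗ₜ[R] 1) = a ⊗ₜ[R] 1 := by
  suffices φ ∘ₗ (TensorProduct.mk R A A).flip 1 = (TensorProduct.mk R A A).flip 1 from
    LinearMap.congr_fun this a
  refine DirectSum.decompose_lhom_ext 𝒜 fun p ↦ ?_
  ext a
  simpa using hφ p 0 a a.2 1 SetLike.GradedOne.one_mem

/-- In the paper's notation, `φ_θ (a d_θ b) = γ p q • a db`. -/
lemma IsPhaseMap.apply_twisted_differential (hφ : IsPhaseMap 𝒜 𝒜 (γ · ·) φ)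
    (hstp : IsTwistedMul 𝒜 (γ · ·) stp) {p q : ι} {a b : A} (ha : a ∈ 𝒜 p) (hb : b ∈ 𝒜 q) :
    φ (stp a 1 ⊗ₜ[R] b - stp a b ⊗ₜ[R] 1) = γ p q • (a ⊗ₜ[R] b - (a * b) ⊗ₜ[R] 1) := by
  rw [map_sub, hφ.apply_tmul_one, hstp.apply_one, hφ p q a ha b hb, hstp p q a ha b hb,
    ← TensorProduct.smul_tmul', smul_sub]

lemma IsBraidedMul.phaseMap_apply (hbmul : IsBraidedMul 𝒜 ρ stp bmul)
    (hρ : ∀ u w, γ u w * ρ u w = γ w u) (hstp : IsTwistedMul 𝒜 (γ · ·) stp)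
    (hφ : IsPhaseMap 𝒜 𝒜 (γ · ·) φ) {r s : ι} {x y : A ⊗[R] A}
    (hx : x ∈ totalDegree 𝒜 r) (hy : y ∈ totalDegree 𝒜 s) :
    φ (bmul x y) = γ r s • (φ x * φ y) := by
  induction hx, hy using Submodule.span_induction₂ with
  | mem_mem x y hx hy =>
    obtain ⟨p, p', rfl, a, ha, a', ha', rfl⟩ := hx
    obtain ⟨u, u', rfl, b, hb, b', hb', rfl⟩ := hy
    calc φ (bmul (a ⊗ₜ a') (b ⊗ₜ b'))
        = (ρ u p' * γ p u * γ p' u' * γ (p + u) (p' + u')) • ((a * b) ⊗ₜ (a' * b')) := by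
          rw [hbmul p p' u u' a ha a' ha' b hb b' hb', hstp p u a ha b hb,
            hstp p' u' a' ha' b' hb', TensorProduct.smul_tmul_smul, map_smul, map_smul,
            hφ _ _ _ (SetLike.mul_mem_graded ha hb) _ (SetLike.mul_mem_graded ha' hb'),
            smul_smul, smul_smul, ← mul_assoc (ρ u p')]
      _ = γ (p + p') (u + u') • (φ (a ⊗ₜ a') * φ (b ⊗ₜ b')) := by
          rw [braiding_mul_bicharacter hρ, hφ p p' a ha a' ha', hφ u u' b hb b' hb',
            smul_mul_smul_comm, Algebra.TensorProduct.tmul_mul_tmul, smul_smul]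
  | zero_left y _ => simp
  | zero_right x _ => simp
  | add_left x y z _ _ _ h₁ h₂ => simp [h₁, h₂, add_mul]
  | add_right x y z _ _ _ h₁ h₂ => simp [h₁, h₂, mul_add]
  | smul_left c x y _ _ h => simp [h, smul_comm c]
  | smul_right c x y _ _ h => simp [h, smul_comm c]

theorem IsBraidedMul.map_sq_ker_lift (hbmul : IsBraidedMul 𝒜 ρ stp bmul)
    (hρ : ∀ u w, γ u w * ρ u w = γ w u) (hstp : IsTwistedMul 𝒜 (γ · ·) stp)
    (hφ : IsPhaseMap 𝒜 𝒜 (γ · ·) φ) (hγ : ∀ p q, IsUnit (γ p q)) :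
    (Submodule.map₂ bmul (LinearMap.ker (TensorProduct.lift stp))
        (LinearMap.ker (TensorProduct.lift stp))).map φ
      = LinearMap.ker (LinearMap.mul' R A) * LinearMap.ker (LinearMap.mul' R A) := by
  set Kθ := LinearMap.ker (TensorProduct.lift stp) with hKθ
  have hspan : Submodule.span R {x | x ∈ Kθ ∧ ∃ r, x ∈ totalDegree 𝒜 r} = Kθ :=
    span_ker_inter_totalDegree (by simpa using hstp.apply_one) fun p q a ha b hb ↦ by
      simpa [hstp p q a ha b hb] using
        Submodule.smul_mem _ (γ p q) (SetLike.mul_mem_graded ha hb)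
  calc (Submodule.map₂ bmul Kθ Kθ).map φ
      = Submodule.map₂ (bmul.compr₂ φ) Kθ Kθ := Submodule.map_map₂ ..
    _ = Submodule.map₂ ((LinearMap.mul R (A ⊗[R] A)).compl₁₂ φ φ) Kθ Kθ := by
        rw [← hspan]
        refine map₂_span_span_eq_of_eq_smul fun x ⟨_, r, hx⟩ y ⟨_, s, hy⟩ ↦ ?_
        exact ⟨(hγ r s).unit, hbmul.phaseMap_apply hρ hstp hφ hx hy⟩
    _ = Kθ.map φ * Kθ.map φ := by rw [← Submodule.map₂_map_map, Submodule.mul_eq_map₂]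
    _ = _ := by rw [hKθ, hstp.map_ker_lift hφ hγ]

end Twist

section VerticalLift

variable {R ι A : Type*} [CommRing R] [CommRing A] [Algebra R A]

lemma sq_ker_mul'_le_ker_vertical (D : Derivation R A A) :
    LinearMap.ker (LinearMap.mul' R A) * LinearMap.ker (LinearMap.mul' R A)
      ≤ LinearMap.ker (LinearMap.mul' R A ∘ₗ TensorProduct.map LinearMap.id D) := by
  have hD : LinearMap.mul' R A ∘ₗ TensorProduct.map LinearMap.id D
      = D.tensorProductTo.restrictScalars R := TensorProduct.ext' fun _ _ ↦ rfl
  rw [hD, Submodule.mul_le]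
  intro x (hx : Algebra.TensorProduct.lmul' R x = 0) y (hy : Algebra.TensorProduct.lmul' R y = 0)
  simp [Derivation.tensorProductTo_mul, hx, hy]

variable [AddMonoid ι] [DecidableEq ι] {𝒜 : ι → Submodule R A} [GradedAlgebra 𝒜]
  {δ : ι →+ R} {E : A →ₗ[R] A}

lemma IsEulerOperator.leibniz (hE : IsEulerOperator 𝒜 δ E) (a b : A) :
    E (a * b) = a • E b + b • E a := by
  suffices E ∘ₗ LinearMap.mul' R A = LinearMap.mul' R A ∘ₗ
      (TensorProduct.map LinearMap.id E + TensorProduct.map E LinearMap.id) by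
    simpa [mul_comm b] using LinearMap.congr_fun this (a ⊗ₜ b)
  refine tensorProduct_ext_homogeneous 𝒜 𝒜 fun p q a ha b hb ↦ ?_
  simp [hE p a ha, hE q b hb, hE _ _ (SetLike.mul_mem_graded ha hb), ← add_smul, add_comm]

end VerticalLift

section Phase

variable (θ : ℝ)

lemma phase_add_left (p p' q : ℤ × ℤ) : phase θ (p + p') q = phase θ p q * phase θ p' q := by
  simp only [phase, ← Complex.exp_add, Prod.fst_add, Prod.snd_add]
  congr 1
  push_cast
  ring

lemma phase_add_right (p q q' : ℤ × ℤ) : phase θ p (q + q') = phase θ p q * phase θ p q' := by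
  simp only [phase, ← Complex.exp_add, Prod.fst_add, Prod.snd_add]
  congr 1
  push_cast
  ring

lemma phase_mul_rphase (u w : ℤ × ℤ) : phase θ u w * rphase θ u w = phase θ w u := by
  simp only [phase, rphase, ← Complex.exp_add]
  congr 1
  push_cast
  ring

/-- `phase θ` as a bicharacter of `ℤ²`: a character with values in characters. -/
def phaseChar : AddChar (ℤ × ℤ) (AddChar (ℤ × ℤ) ℂ) where
  toFun p :=
    { toFun := phase θ p
      map_zero_eq_one' := by simp [phase]
      map_add_eq_mul' := phase_add_right θ p }
  map_zero_eq_one' := by ext; simp [phase]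
  map_add_eq_mul' p p' := AddChar.ext _ _ (phase_add_left θ p p')

end Phase

/-- The total degree `(m₁, m₂) ↦ m₁ + m₂` of the Hopf fibration, as a weight for the Euler
operator. -/
def hopfWeight : ℤ × ℤ →+ ℂ := (Int.castAddHom ℂ).comp (.coprod (.id ℤ) (.id ℤ))

/-- `hρ` says that the star product is braided commutative: `b ⋆ a = ρ u w • (a ⋆ b)` for `a`, `b`
of degrees `u`, `w`. -/
theorem kaehler_atiyah_sequences_isomorphic_general
    {R ι A : Type*} [CommRing R] [AddGroup ι] [DecidableEq ι] [CommRing A] [Algebra R A]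
    {𝒜 : ι → Submodule R A} [GradedAlgebra 𝒜]
    {γ : AddChar ι (AddChar ι R)} {ρ : ι → ι → R} (hρ : ∀ u w, γ u w * ρ u w = γ w u)
    {stp : A →ₗ[R] A →ₗ[R] A} (hstp : IsTwistedMul 𝒜 (γ · ·) stp)
    {φ : A ⊗[R] A →ₗ[R] A ⊗[R] A} (hφ : IsPhaseMap 𝒜 𝒜 (γ · ·) φ)
    {bmul : A ⊗[R] A →ₗ[R] A ⊗[R] A →ₗ[R] A ⊗[R] A} (hbmul : IsBraidedMul 𝒜 ρ stp bmul)
    {δ : ι →+ R} {E : A →ₗ[R] A} (hE : IsEulerOperator 𝒜 δ E)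
    {K Kθ K2 K2θ : Submodule R (A ⊗[R] A)}
    (hK : K = LinearMap.ker (LinearMap.mul' R A))
    (hKθ : Kθ = LinearMap.ker (TensorProduct.lift stp))
    (hK2 : K2 = K * K)
    (hK2θ : K2θ = Submodule.span R {y | ∃ x ∈ Kθ, ∃ x' ∈ Kθ, y = bmul x x'}) :
    (Set.BijOn φ K2θ K2 ∧ K2θ.map φ = K2) ∧
    ∃ φbar : ((A ⊗[R] A) ⧸ K2θ) →ₗ[R] ((A ⊗[R] A) ⧸ K2),
      (∀ x, φbar (K2θ.mkQ x) = K2.mkQ (φ x)) ∧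
      Set.BijOn φbar (Kθ.map K2θ.mkQ) (K.map K2.mkQ) ∧
      (∀ p q, ∀ a ∈ 𝒜 p, ∀ a' ∈ 𝒜 q,
        φbar (K2θ.mkQ (stp a 1 ⊗ₜ[R] a' - stp a a' ⊗ₜ[R] 1))
          = γ p q • K2.mkQ (a ⊗ₜ[R] a' - (a * a') ⊗ₜ[R] 1)) ∧
      ∃ (vbar : ((A ⊗[R] A) ⧸ K2) →ₗ[R] A) (vθbar : ((A ⊗[R] A) ⧸ K2θ) →ₗ[R] A),
        (∀ x, vbar (K2.mkQ x) = LinearMap.mul' R A (TensorProduct.map LinearMap.id E x)) ∧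
        (∀ x, vθbar (K2θ.mkQ x)
          = TensorProduct.lift stp (TensorProduct.map LinearMap.id E x)) ∧
        vbar.comp φbar = vθbar := by
  have hγ p q : IsUnit (γ p q) := (γ p).val_isUnit q
  have hφ_bij : Function.Bijective φ := hφ.bijective hγ
  have hmapK : Kθ.map φ = K := hK ▸ hKθ ▸ hstp.map_ker_lift hφ hγ
  have hmapK2 : K2θ.map φ = K2 := by
    have hmap₂ : K2θ = Submodule.map₂ bmul Kθ Kθ := by
      simp only [hK2θ, Submodule.map₂_eq_span_image2, Set.image2, SetLike.mem_coe, eq_comm]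
    rw [hmap₂, hK2, hK, hKθ, hbmul.map_sq_ker_lift hρ hstp hφ hγ]
  let φbar := Submodule.Quotient.equiv K2θ K2 (.ofBijective φ hφ_bij) hmapK2
  have hv : K2 ≤ LinearMap.ker (LinearMap.mul' R A ∘ₗ TensorProduct.map LinearMap.id E) :=
    hK2 ▸ hK ▸ sq_ker_mul'_le_ker_vertical (.mk' E hE.leibniz)
  refine ⟨⟨bijOn_of_map_eq hφ_bij.injective hmapK2, hmapK2⟩, φbar.toLinearMap, fun _ ↦ rfl,
    bijOn_of_map_eq φbar.injective ?_, fun p q a ha a' ha' ↦ ?_,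
    K2.liftQ _ hv, K2.liftQ _ hv ∘ₗ φbar.toLinearMap, fun _ ↦ rfl, fun x ↦ ?_, rfl⟩
  · rw [← hmapK, ← Submodule.map_comp, ← Submodule.map_comp]
    rfl
  · exact (congrArg K2.mkQ (hφ.apply_twisted_differential hstp ha ha')).trans (map_smul ..)
  · rw [hstp.lift_eq_mul'_comp hφ]
    exact congrArg (LinearMap.mul' R A) (LinearMap.congr_fun (hE.isPhaseMap_map_id.comp_comm hφ) x)

/-- `φ_θ` maps the braided square `(Γ¹(A_θ))²` bijectively onto `(Γ¹(A))²`
and hence descends to a linear bijection `φ̄_θ : Ω¹(A_θ) → Ω¹(A)`, sending the class of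
`a d_θ a'` to `e^{πiθ(m₁m₂'−m₂m₁')}` times the class of `a da'` for homogeneous `a, a'`;
moreover `v ∘ φ̄_θ = v_θ` for the vertical lifts of the Kähler-type Atiyah sequences. -/
theorem kaehler_atiyah_sequences_isomorphic
    (A : Type) [CommRing A] [Algebra ℂ A]
    (𝒜 : ℤ × ℤ → Submodule ℂ A) [GradedAlgebra 𝒜]
    (z1 z2 z1s z2s : A)
    (hz1 : z1 ∈ 𝒜 (1, 0)) (hz2 : z2 ∈ 𝒜 (0, 1))
    (hz1s : z1s ∈ 𝒜 (-1, 0)) (hz2s : z2s ∈ 𝒜 (0, -1))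
    (hrel : z1s * z1 + z2s * z2 = 1)
    (huniv : ∀ (C : Type) [CommRing C] [Algebra ℂ C] (w1 w2 w1s w2s : C),
      w1s * w1 + w2s * w2 = 1 →
      ∃! f : A →ₐ[ℂ] C, f z1 = w1 ∧ f z2 = w2 ∧ f z1s = w1s ∧ f z2s = w2s)
    (θ : ℝ)
    (stp : A →ₗ[ℂ] A →ₗ[ℂ] A)
    (hstp : ∀ (p q : ℤ × ℤ), ∀ a ∈ 𝒜 p, ∀ a' ∈ 𝒜 q, stp a a' = phase θ p q • (a * a'))
    -- the cocycle phase map `φ_θ` on `A ⊗ A`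
    (φ : A ⊗[ℂ] A →ₗ[ℂ] A ⊗[ℂ] A)
    (hφ : ∀ (p q : ℤ × ℤ), ∀ a ∈ 𝒜 p, ∀ a' ∈ 𝒜 q,
      φ (a ⊗ₜ[ℂ] a') = phase θ p q • (a ⊗ₜ[ℂ] a'))
    -- the braided product on `A ⊗ A`
    (bmul : A ⊗[ℂ] A →ₗ[ℂ] A ⊗[ℂ] A →ₗ[ℂ] A ⊗[ℂ] A)
    (hbmul : ∀ (p p' u u' : ℤ × ℤ), ∀ a ∈ 𝒜 p, ∀ a' ∈ 𝒜 p', ∀ c ∈ 𝒜 u, ∀ c' ∈ 𝒜 u',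
      bmul (a ⊗ₜ[ℂ] a') (c ⊗ₜ[ℂ] c')
        = rphase θ u p' • ((stp a c) ⊗ₜ[ℂ] (stp a' c')))
    -- the Euler operator, multiplying total-degree-`n` elements by `n`
    (Euler : A →ₗ[ℂ] A)
    (hEuler : ∀ (p : ℤ × ℤ), ∀ a ∈ 𝒜 p, Euler a = ((p.1 + p.2 : ℤ) : ℂ) • a) :
    -- notation: `K = Γ¹(A)`, `Kθ = Γ¹(A_θ)`, `K2 = (Γ¹(A))²`, `K2θ = (Γ¹(A_θ))²`
    ∀ (K Kθ K2 K2θ : Submodule ℂ (A ⊗[ℂ] A)),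
      K = LinearMap.ker (LinearMap.mul' ℂ A) →
      Kθ = LinearMap.ker (TensorProduct.lift stp) →
      K2 = K * K →
      K2θ = Submodule.span ℂ {y : A ⊗[ℂ] A | ∃ x ∈ Kθ, ∃ x' ∈ Kθ, y = bmul x x'} →
      -- `φ_θ` maps `(Γ¹(A_θ))²` bijectively onto `(Γ¹(A))²`
      (Set.BijOn φ K2θ K2 ∧ Submodule.map φ K2θ = K2) ∧
      -- `φ_θ` descends to a linear bijection `φ̄_θ : Ω¹(A_θ) → Ω¹(A)` with the stated
      -- formula, compatible with the vertical lifts `v` and `v_θ`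
      (∃ φbar : ((A ⊗[ℂ] A) ⧸ K2θ) →ₗ[ℂ] ((A ⊗[ℂ] A) ⧸ K2),
        (∀ x : A ⊗[ℂ] A, φbar (K2θ.mkQ x) = K2.mkQ (φ x)) ∧
        Set.BijOn φbar (Submodule.map K2θ.mkQ Kθ) (Submodule.map K2.mkQ K) ∧
        (∀ (p q : ℤ × ℤ), ∀ a ∈ 𝒜 p, ∀ a' ∈ 𝒜 q,
          φbar (K2θ.mkQ ((stp a 1) ⊗ₜ[ℂ] a' - (stp a a') ⊗ₜ[ℂ] (1 : A)))
            = phase θ p q • K2.mkQ (a ⊗ₜ[ℂ] a' - (a * a') ⊗ₜ[ℂ] (1 : A))) ∧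
        (∃ (vbar : ((A ⊗[ℂ] A) ⧸ K2) →ₗ[ℂ] A) (vθbar : ((A ⊗[ℂ] A) ⧸ K2θ) →ₗ[ℂ] A),
          (∀ x : A ⊗[ℂ] A, vbar (K2.mkQ x)
            = LinearMap.mul' ℂ A (TensorProduct.map LinearMap.id Euler x)) ∧
          (∀ x : A ⊗[ℂ] A, vθbar (K2θ.mkQ x)
            = TensorProduct.lift stp (TensorProduct.map LinearMap.id Euler x)) ∧
          vbar.comp φbar = vθbar)) := by
  intro _ _ _ _ hK hKθ hK2 hK2θ
  exact kaehler_atiyah_sequences_isomorphic_general (γ := phaseChar θ) (δ := hopfWeight)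
    (phase_mul_rphase θ) hstp hφ hbmul hEuler hK hKθ hK2 hK2θ
end
end
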